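/- arXiv:1908.09420 — 2 statements merged into one kernel-verified Lean document; each statement's English description precedes it below -/
import Mathlib

section
/- Let N be an odd perfect number with at least three distinct prime divisors, and let a, b, c denote respectively its third largest, second largest, and largest prime divisors. If a ∥ N, b² ∥ N, and c² ∥ N, then a < (2N)^(1/7), i.e., a^7 < 2N. -/
/-- The divisor sum of the square of a prime. -/
lemma sum_divisors_prime_sq {p : ℕ} (hp : p.Prime) :
    ∑ d ∈ (p ^ 2).divisors, d = p ^ 2 + p + 1 := by
  rw [Nat.sum_divisors_prime_pow hp (f := fun d => d)]
  simp [Finset.sum_range_succ]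
  ring

/-- If `c ∣ b² + b + 1`, then `b² ∤ c² + c + 1` for `1 < b < c`. -/
lemma not_sq_dvd_of_dvd {b c : ℕ} (hb : 1 < b) (hbc : b < c) (hc : c ∣ b ^ 2 + b + 1) :
    ¬ b ^ 2 ∣ c ^ 2 + c + 1 := by
  rintro ⟨j, hj⟩
  obtain ⟨k, hk⟩ := hc
  have hkb : k < b := by
    by_contra! h
    rcases h.eq_or_lt with rfl | h
    · have : b ∣ 1 := (Nat.dvd_add_right ⟨b + 1, by ring⟩).1 (hk ▸ Dvd.intro_left c rfl)
      exact hb.ne' (Nat.dvd_one.1 this)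
    · nlinarith [Nat.mul_le_mul hbc (Nat.succ_le_of_lt h)]
  -- Multiply `c² + c + 1` by `k²` and reduce modulo `b²`.
  have hdvd : (b : ℤ) ^ 2 ∣ k ^ 2 + b * k + k + 1 + 2 * b := by
    zify at hj hk
    refine ⟨j * k ^ 2 - (b ^ 2 + 2 * b + 3 + k), ?_⟩
    linear_combination ((k : ℤ) ^ 2) * hj + (b ^ 2 + b + 1 + c * k + k : ℤ) * hk
  obtain ⟨t, ht⟩ : b ^ 2 ∣ k ^ 2 + b * k + k + 1 + 2 * b := by exact_mod_cast hdvd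
  have htpos : 0 < t := by
    rcases Nat.eq_zero_or_pos t with rfl | h
    · simp at ht
    · exact h
  obtain ⟨r, rfl⟩ : ∃ r, b = k + 1 + r := ⟨b - (k + 1), by omega⟩
  have ht2 : t = 1 := by
    by_contra hne
    have h2 : 2 ≤ t := by omega
    have hle := Nat.mul_le_mul_left ((k + 1 + r) ^ 2) h2
    rw [← ht] at hle
    rcases Nat.eq_zero_or_pos r with rfl | hr
    · rcases Nat.lt_or_ge t 3 with h3 | h3
      · obtain rfl : t = 2 := by omega
        ring_nf at ht
        omega
      · have := Nat.mul_le_mul_left ((k + 1 + 0) ^ 2) h3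
        rw [← ht] at this
        nlinarith
    · nlinarith
  subst ht2
  generalize k + 1 + r = b at ht
  have hmod := congrArg (Nat.cast : ℕ → ZMod 9) ht
  push_cast at hmod
  have key : ∀ x y : ZMod 9, y ^ 2 + x * y + y + 1 + 2 * x ≠ x ^ 2 * 1 := by decide
  exact key _ _ hmod

/-- Every `x` is coprime to `x² + x + 1`. -/
lemma coprime_sq_add_self_add_one (x : ℕ) : Nat.Coprime x (x ^ 2 + x + 1) := by
  have h : x ^ 2 + x + 1 = 1 + x * (x + 1) := by ring
  rw [h]
  simp

/-- A strict decrease in the number of larger elements reverses the order. -/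
lemma lt_of_card_filter_lt {s : Finset ℕ} {x y : ℕ}
    (h : (s.filter (fun q => y < q)).card < (s.filter (fun q => x < q)).card) : x < y := by
  by_contra! hyx
  refine absurd (Finset.card_le_card fun q hq => ?_) (not_le.mpr h)
  rw [Finset.mem_filter] at hq ⊢
  exact ⟨hq.1, hyx.trans_lt hq.2⟩

/-- Let N be an odd perfect number with at least three distinct
prime divisors, with c, b, a its largest, second largest and third largest
prime divisors. If a ∥ N, b² ∥ N, and c² ∥ N, then a < (2N)^(1/7),
i.e., a^7 < 2N. -/
theorem stmt_15 (N : ℕ) (hodd : Odd N) (hperf : Nat.Perfect N)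
    (hk : 3 ≤ N.primeFactors.card)
    (a b c : ℕ)
    (ha : a ∈ N.primeFactors) (hb : b ∈ N.primeFactors) (hc : c ∈ N.primeFactors)
    (ha2 : (N.primeFactors.filter (fun q => a < q)).card = 2)
    (hb1 : (N.primeFactors.filter (fun q => b < q)).card = 1)
    (hc0 : (N.primeFactors.filter (fun q => c < q)).card = 0)
    (haN : a ∣ N ∧ ¬ a ^ 2 ∣ N)
    (hbN : b ^ 2 ∣ N ∧ ¬ b ^ 3 ∣ N)
    (hcN : c ^ 2 ∣ N ∧ ¬ c ^ 3 ∣ N) :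
    a ^ 7 < 2 * N := by
  have hab : a < b := lt_of_card_filter_lt (s := N.primeFactors) (by omega)
  have hbc : b < c := lt_of_card_filter_lt (s := N.primeFactors) (by omega)
  have hac : a < c := hab.trans hbc
  have pa := Nat.prime_of_mem_primeFactors ha
  have pb := Nat.prime_of_mem_primeFactors hb
  have pc := Nat.prime_of_mem_primeFactors hc
  have oa : Odd a := hodd.of_dvd_nat haN.1
  have ob : Odd b := hodd.of_dvd_nat (Nat.dvd_of_mem_primeFactors hb)
  have ha1b : a + 1 < b := by
    obtain ⟨x, rfl⟩ := oa
    obtain ⟨y, rfl⟩ := ob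
    omega
  have cab : Nat.Coprime a b := (Nat.coprime_primes pa pb).2 hab.ne
  have cac : Nat.Coprime a c := (Nat.coprime_primes pa pc).2 hac.ne
  have cbc : Nat.Coprime b c := (Nat.coprime_primes pb pc).2 hbc.ne
  have cab2 : Nat.Coprime a (b ^ 2) := cab.pow_right 2
  have cabc : Nat.Coprime (a * b ^ 2) (c ^ 2) :=
    Nat.Coprime.mul_left (cac.pow_right 2) (cbc.pow 2 2)
  obtain ⟨m, hm⟩ : a * b ^ 2 * c ^ 2 ∣ N :=
    cabc.mul_dvd_of_dvd_of_dvd (cab2.mul_dvd_of_dvd_of_dvd haN.1 hbN.1) hcN.1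
  have cam : Nat.Coprime a m := (pa.coprime_iff_not_dvd).2 fun ⟨x, hx⟩ =>
    haN.2 ⟨b ^ 2 * c ^ 2 * x, by rw [hm, hx]; ring⟩
  have cbm : Nat.Coprime b m := (pb.coprime_iff_not_dvd).2 fun ⟨x, hx⟩ =>
    hbN.2 ⟨a * c ^ 2 * x, by rw [hm, hx]; ring⟩
  have ccm : Nat.Coprime c m := (pc.coprime_iff_not_dvd).2 fun ⟨x, hx⟩ =>
    hcN.2 ⟨a * b ^ 2 * x, by rw [hm, hx]; ring⟩
  have cm : Nat.Coprime (a * b ^ 2 * c ^ 2) m :=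
    Nat.Coprime.mul_left (Nat.Coprime.mul_left cam (cbm.pow_left 2)) (ccm.pow_left 2)
  have hNpos : 0 < N := hperf.2
  have hmpos : 0 < m := Nat.pos_of_ne_zero fun h => by simp [h] at hm; omega
  have hsum := (Nat.perfect_iff_sum_divisors_eq_two_mul hNpos).1 hperf
  rw [hm, cm.sum_divisors_mul, cabc.sum_divisors_mul, cab2.sum_divisors_mul,
    sum_divisors_prime_sq pb, sum_divisors_prime_sq pc, pa.sum_divisors (f := fun d => d)] at hsum
  set s := ∑ d ∈ m.divisors, d with hs
  have hs2 : s < 2 * m := by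
    by_contra! h
    have h1 : a * b ^ 2 * c ^ 2 < (a + 1) * (b ^ 2 + b + 1) * (c ^ 2 + c + 1) := by
      gcongr <;> omega
    have h2 := Nat.mul_lt_mul_of_lt_of_le h1 h (by omega)
    nlinarith
  have hbs : b ^ 2 ∣ (c ^ 2 + c + 1) * s := by
    have h : b ^ 2 ∣ (a + 1) * (b ^ 2 + b + 1) * ((c ^ 2 + c + 1) * s) :=
      ⟨2 * (a * c ^ 2 * m), by linarith⟩
    refine Nat.Coprime.dvd_of_dvd_mul_left (Nat.Coprime.pow_left 2 ?_) h
    exact Nat.Coprime.mul_right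
      ((pb.coprime_iff_not_dvd).2 (Nat.not_dvd_of_pos_of_lt (by omega) ha1b))
      (coprime_sq_add_self_add_one b)
  have hcs : c ^ 2 ∣ (b ^ 2 + b + 1) * s := by
    have h : c ^ 2 ∣ (a + 1) * (c ^ 2 + c + 1) * ((b ^ 2 + b + 1) * s) :=
      ⟨2 * (a * b ^ 2 * m), by linarith⟩
    refine Nat.Coprime.dvd_of_dvd_mul_left (Nat.Coprime.pow_left 2 ?_) h
    exact Nat.Coprime.mul_right
      ((pc.coprime_iff_not_dvd).2 (Nat.not_dvd_of_pos_of_lt (by omega) (ha1b.trans hbc)))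
      (coprime_sq_add_self_add_one c)
  have hspos : 0 < s := by
    rw [hs]
    exact Finset.sum_pos (fun d hd => Nat.pos_of_mem_divisors hd) ⟨1, by simp; omega⟩
  -- In every case `2 * m` exceeds a product of two primes larger than `a`.
  have ham : a ^ 2 < 2 * m := by
    by_cases hcb : c ∣ b ^ 2 + b + 1
    · have hcs' : c ∣ s := by
        by_contra h
        have h2 := Nat.Coprime.dvd_of_dvd_mul_right
          (((pc.coprime_iff_not_dvd).2 h).pow_left 2) hcs
        have hle := Nat.le_of_dvd (by omega) h2
        have hlt : (b + 1) ^ 2 ≤ c ^ 2 := Nat.pow_le_pow_left hbc 2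
        linarith [pb.pos, add_sq b 1]
      have hbs' : b ∣ s := by
        by_contra h
        exact not_sq_dvd_of_dvd pb.one_lt hbc hcb
          (Nat.Coprime.dvd_of_dvd_mul_right (((pb.coprime_iff_not_dvd).2 h).pow_left 2) hbs)
      have := Nat.le_of_dvd hspos (cbc.mul_dvd_of_dvd_of_dvd hbs' hcs')
      calc a ^ 2 = a * a := sq a
        _ ≤ b * c := Nat.mul_le_mul hab.le hac.le
        _ < 2 * m := by omega
    · have h2 := Nat.Coprime.dvd_of_dvd_mul_left
        (((pc.coprime_iff_not_dvd).2 hcb).pow_left 2) hcs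
      have := Nat.le_of_dvd hspos h2
      calc a ^ 2 ≤ c ^ 2 := Nat.pow_le_pow_left hac.le 2
        _ < 2 * m := by omega
  have hapos := pa.pos
  calc a ^ 7 = a * a ^ 2 * a ^ 2 * a ^ 2 := by ring
    _ < a * b ^ 2 * c ^ 2 * (2 * m) := by
      gcongr
    _ = 2 * N := by rw [hm]; ring
end

section
/- Let N be an odd perfect number with at least two distinct prime divisors, and let b and c denote respectively its second largest and largest prime divisors. If b² ∥ N and c² ∥ N, then bc ≤ 2 · 3^(1/3) · N^(5/12). -/
open ArithmeticFunction in
theorem sigma_one_prime_sq {p : ℕ} (hp : p.Prime) : sigma 1 (p ^ 2) = p ^ 2 + p + 1 := by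
  rw [sigma_one_apply_prime_pow hp]
  simp only [Finset.sum_range_succ, Finset.sum_range_zero]
  ring

/-- If `b < c` are primes and `b² * c² * m` is a perfect number with `m` coprime to `b`
and `c`, then `c` divides `σ(m)`, whence `c ≤ 2 * m`. -/
theorem largest_prime_le_two_mul_cofactor {b c m : ℕ} (hb : b.Prime) (hc : c.Prime) (hbc : b < c)
    (hbm : b.Coprime m) (hcm : c.Coprime m)
    (hperf : Nat.Perfect (b ^ 2 * c ^ 2 * m)) : c ≤ 2 * m := by
  have hm : 0 < m := Nat.pos_of_mul_pos_left hperf.2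
  have hsig : (b ^ 2 + b + 1) * (c ^ 2 + c + 1) * ArithmeticFunction.sigma 1 m
      = 2 * (b ^ 2 * c ^ 2 * m) := by
    have hcop : (b ^ 2).Coprime (c ^ 2) :=
      Nat.Coprime.pow 2 2 ((Nat.coprime_primes hb hc).2 hbc.ne)
    have hcop' : (b ^ 2 * c ^ 2).Coprime m :=
      Nat.Coprime.mul_left (hbm.pow_left 2) (hcm.pow_left 2)
    rw [← (Nat.perfect_iff_sum_divisors_eq_two_mul hperf.2).1 hperf,
      ← ArithmeticFunction.sigma_one_apply,
      ArithmeticFunction.isMultiplicative_sigma.map_mul_of_coprime hcop',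
      ArithmeticFunction.isMultiplicative_sigma.map_mul_of_coprime hcop,
      sigma_one_prime_sq hb, sigma_one_prime_sq hc]
  set s := ArithmeticFunction.sigma 1 m
  have hle : s ≤ 2 * m := by
    have hpos : 0 < b ^ 2 * c ^ 2 := Nat.mul_pos (pow_pos hb.pos 2) (pow_pos hc.pos 2)
    refine Nat.le_of_mul_le_mul_left ?_ hpos
    calc b ^ 2 * c ^ 2 * s ≤ (b ^ 2 + b + 1) * (c ^ 2 + c + 1) * s := by gcongr <;> omega
      _ = b ^ 2 * c ^ 2 * (2 * m) := by rw [hsig]; ring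
  have hs : 0 < s := ArithmeticFunction.sigma_pos 1 m hm.ne'
  suffices h : c ∣ s from (Nat.le_of_dvd hs h).trans hle
  by_contra hns
  have hcc : (c ^ 2).Coprime (c ^ 2 + c + 1) := by
    refine Nat.Coprime.pow_left 2 ((Nat.Prime.coprime_iff_not_dvd hc).2 fun h => hc.one_lt.ne' ?_)
    exact Nat.dvd_one.1 ((Nat.dvd_add_right ⟨c + 1, by ring⟩).1 h)
  have hcs : (c ^ 2).Coprime s :=
    Nat.Coprime.pow_left 2 ((Nat.Prime.coprime_iff_not_dvd hc).2 hns)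
  have hdvd : c ^ 2 ∣ (b ^ 2 + b + 1) * (c ^ 2 + c + 1) * s :=
    hsig ▸ ⟨2 * b ^ 2 * m, by ring⟩
  have := Nat.le_of_dvd (by omega) (hcc.dvd_of_dvd_mul_right (hcs.dvd_of_dvd_mul_right hdvd))
  nlinarith [hb.two_le]

/-- Let N be an odd perfect number with at least two distinct
prime divisors, with c its largest and b its second largest prime divisor.
If b² ∥ N and c² ∥ N, then bc ≤ 2 · 3^(1/3) · N^(5/12). -/
theorem stmt_17 (N : ℕ) (hodd : Odd N) (hperf : Nat.Perfect N)
    (hk : 2 ≤ N.primeFactors.card)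
    (b c : ℕ)
    (hb : b ∈ N.primeFactors) (hc : c ∈ N.primeFactors)
    (hb1 : (N.primeFactors.filter (fun q => b < q)).card = 1)
    (hc0 : (N.primeFactors.filter (fun q => c < q)).card = 0)
    (hbN : b ^ 2 ∣ N ∧ ¬ b ^ 3 ∣ N)
    (hcN : c ^ 2 ∣ N ∧ ¬ c ^ 3 ∣ N) :
    (b * c : ℝ) ≤ 2 * (3 : ℝ) ^ ((1 : ℝ) / 3) * (N : ℝ) ^ ((5 : ℝ) / 12) := by
  have hbp := Nat.prime_of_mem_primeFactors hb
  have hcp := Nat.prime_of_mem_primeFactors hc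
  have hbc : b < c := by
    obtain ⟨q, hq⟩ := Finset.card_pos.1 (hb1 ▸ Nat.one_pos)
    obtain ⟨hqN, hbq⟩ := Finset.mem_filter.1 hq
    exact hbq.trans_le (not_lt.1 (Finset.filter_eq_empty_iff.1 (Finset.card_eq_zero.1 hc0) hqN))
  obtain ⟨m, rfl⟩ : b ^ 2 * c ^ 2 ∣ N :=
    (Nat.Coprime.pow 2 2 ((Nat.coprime_primes hbp hcp).2 hbc.ne)).mul_dvd_of_dvd_of_dvd
      hbN.1 hcN.1
  have hbm : b.Coprime m := (Nat.Prime.coprime_iff_not_dvd hbp).2 fun ⟨k, hk⟩ =>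
    hbN.2 ⟨c ^ 2 * k, by rw [hk]; ring⟩
  have hcm : c.Coprime m := (Nat.Prime.coprime_iff_not_dvd hcp).2 fun ⟨k, hk⟩ =>
    hcN.2 ⟨b ^ 2 * k, by rw [hk]; ring⟩
  have hle := largest_prime_le_two_mul_cofactor hbp hcp hbc hbm hcm hperf
  have hpow : (b * c) ^ 12 ≤ 2 ^ 12 * 3 ^ 4 * (b ^ 2 * c ^ 2 * m) ^ 5 := by
    calc (b * c) ^ 12 = b ^ 10 * c ^ 10 * (b ^ 2 * c ^ 2 * 1) := by ring
      _ ≤ b ^ 10 * c ^ 10 * (c ^ 2 * c ^ 2 * c) := by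
        gcongr
        exact hcp.one_le
      _ = b ^ 10 * c ^ 10 * c ^ 5 := by ring
      _ ≤ b ^ 10 * c ^ 10 * (2 * m) ^ 5 := by gcongr
      _ = 2 ^ 5 * 1 * (b ^ 2 * c ^ 2 * m) ^ 5 := by ring
      _ ≤ 2 ^ 12 * 3 ^ 4 * (b ^ 2 * c ^ 2 * m) ^ 5 := by gcongr <;> norm_num
  generalize b ^ 2 * c ^ 2 * m = N at hpow ⊢
  refine le_of_pow_le_pow_left₀ (n := 12) (by norm_num) (by positivity) ?_
  have hroot3 : ((3 : ℝ) ^ ((1 : ℝ) / 3)) ^ 12 = 3 ^ 4 := by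
    rw [← Real.rpow_mul_natCast (by norm_num), ← Real.rpow_natCast]
    norm_num
  have hrootN : ((N : ℝ) ^ ((5 : ℝ) / 12)) ^ 12 = (N : ℝ) ^ 5 := by
    rw [← Real.rpow_mul_natCast (by positivity), ← Real.rpow_natCast]
    norm_num
  rw [mul_pow (2 * _), mul_pow 2, hroot3, hrootN]
  exact_mod_cast hpow
end
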